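/- arXiv:2602.16530 — 2 statements merged into one kernel-verified Lean document; each statement's English description precedes it below -/
import Mathlib

section
/- For every positive integer n and every continuous function f : [0,1]^n → ℝ, there exist continuous functions φ_i : ℝ → ℝ for i = 1, …, 2n+1 and continuous functions ψ_{i,q} : [0,1] → ℝ for i = 1, …, 2n+1 and q = 1, …, n such that f(x_1, …, x_n) = ∑_{i=1}^{2n+1} φ_i( ∑_{q=1}^{n} ψ_{i,q}(x_q) ) for all (x_1, …, x_n) ∈ [0,1]^n. -/
namespace KST
open Set unitInterval

lemma stair (M : ℕ) (hM : 1 ≤ M) (δ : ℝ) (hδ : 0 < δ) :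
    ∃ (s : Fin M → C(I, I)) (S : Finset I), (∀ i t, dist (s i t) t < δ) ∧
      ∀ i j t, s i t ∉ S → s j t ∉ S → i = j := by
  obtain ⟨K, hK⟩ := exists_nat_gt (2 / δ)
  have hK0 : (0:ℝ) < K := lt_trans (by positivity) hK
  have hM0 : (1:ℝ) ≤ M := by exact_mod_cast hM
  have hM1 : (0:ℝ) < M := by linarith
  set p : ℝ → ℝ := fun r => min 1 (M * r) - r with hp
  have hpc : Continuous (fun u : ℝ => p (Int.fract u)) := by
    refine ContinuousOn.comp_fract'' (f := p) ?_ ?_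
    · fun_prop
    · simp [hp, hM0]
  let u : Fin M → I → ℝ := fun i t => K * t - i / M
  let v : Fin M → I → ℝ := fun i t => (u i t + p (Int.fract (u i t))) / K
  have hu : ∀ i, Continuous (u i) := fun i => by fun_prop
  have hv : ∀ i, Continuous (v i) := fun i => ((hu i).add (hpc.comp (hu i))).div_const _
  refine ⟨fun i => ⟨fun t => projIcc 0 1 zero_le_one (v i t), continuous_projIcc.comp (hv i)⟩,
    (Finset.Icc (-1 : ℤ) (K + 1)).image (fun j : ℤ => projIcc 0 1 zero_le_one ((j:ℝ) / K)), ?_, ?_⟩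
  · intro i t
    have h1 : |v i t - t| < δ := by
      have hi : (i:ℝ) / M ≤ 1 := by
        rw [div_le_one hM1]; exact_mod_cast i.2.le
      have hi0 : 0 ≤ (i:ℝ) / M := by positivity
      have f0 := Int.fract_nonneg (u i t)
      have f1 := Int.fract_lt_one (u i t)
      have hp0 : 0 ≤ p (Int.fract (u i t)) := by
        simp only [hp, sub_nonneg, le_min_iff]
        exact ⟨f1.le, by nlinarith⟩
      have hp1 : p (Int.fract (u i t)) ≤ 1 := by
        have := min_le_left 1 (M * Int.fract (u i t))
        simp only [hp]; linarith
      have e : v i t - t = (p (Int.fract (u i t)) - i / M) / K := by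
        simp only [v]
        rw [eq_div_iff hK0.ne', sub_mul, div_mul_cancel₀ _ hK0.ne']
        simp only [u]; ring
      rw [e, abs_div, abs_of_pos hK0, div_lt_iff₀ hK0]
      have : 2 < δ * K := by rw [div_lt_iff₀ hδ] at hK; linarith
      rw [abs_lt]; constructor <;> linarith
    have h2 : dist (projIcc 0 1 zero_le_one (v i t)) t ≤ |v i t - t| := by
      have h3 := abs_projIcc_sub_projIcc (a := (0:ℝ)) (b := 1) (c := v i t) (d := (t:ℝ)) zero_le_one
      rw [projIcc_val zero_le_one t] at h3
      exact h3
    exact h2.trans_lt h1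
  · have key : ∀ i t, projIcc 0 1 zero_le_one (v i t) ∉ 
        (Finset.Icc (-1 : ℤ) (K + 1)).image (fun j : ℤ => projIcc (0:ℝ) 1 zero_le_one ((j:ℝ) / K)) →
        ∃ a : ℤ, ((i:ℕ):ℝ) + M * a < M * (K * (t:ℝ)) ∧ (M:ℝ) * (K * (t:ℝ)) < i + M * a + 1 := by
      intro i t h
      have hi : (i:ℝ) / M < 1 := by
        rw [div_lt_one hM1]; exact_mod_cast i.2
      have hi0 : 0 ≤ (i:ℝ) / M := by positivity
      have ht0 : 0 ≤ (K:ℝ) * t := mul_nonneg hK0.le t.2.1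
      have ht1 : (K:ℝ) * t ≤ K := by nlinarith [t.2.2]
      have hfl : -1 ≤ ⌊u i t⌋ := by
        rw [Int.le_floor]; simp only [u]; push_cast; linarith
      have hfl2 : ⌊u i t⌋ ≤ K := by
        have : ⌊u i t⌋ ≤ ⌊((K:ℤ):ℝ)⌋ := Int.floor_le_floor (by simp only [u]; push_cast; linarith)
        rwa [Int.floor_intCast] at this
      have hsum := Int.floor_add_fract (u i t)
      have hMu : M * u i t = M * (K * t) - i := by
        simp only [u]; field_simp
      refine ⟨⌊u i t⌋, ?_⟩
      have f0 : 0 < Int.fract (u i t) := by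
        refine lt_of_le_of_ne (Int.fract_nonneg _) (fun h0 => h ?_)
        refine Finset.mem_image.2 ⟨⌊u i t⌋, by simp; omega, ?_⟩
        simp only [v]
        rw [← h0] at hsum ⊢
        congr 2
        simp [hp]; linarith
      have f1 : M * Int.fract (u i t) < 1 := by
        by_contra! h1
        refine h (Finset.mem_image.2 ⟨⌊u i t⌋ + 1, by simp; omega, ?_⟩)
        simp only [v]
        congr 2
        simp only [hp, min_eq_left h1]; push_cast; linarith
      have : (M:ℝ) * ⌊u i t⌋ + M * Int.fract (u i t) = M * (K * t) - i := by
        rw [← hMu, ← mul_add, hsum]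
      have := mul_pos hM1 f0
      constructor <;> linarith
    intro i j t hi hj
    obtain ⟨a, ha1, ha2⟩ := key i t hi
    obtain ⟨b, hb1, hb2⟩ := key j t hj
    have e1 : ((i:ℕ):ℤ) + M * a < j + M * b + 1 := by
      have : ((i:ℕ):ℝ) + M * a < j + M * b + 1 := by linarith
      exact_mod_cast this
    have e2 : ((j:ℕ):ℤ) + M * b < i + M * a + 1 := by
      have : ((j:ℕ):ℝ) + M * b < i + M * a + 1 := by linarith
      exact_mod_cast this
    have e3 : ((i:ℕ):ℤ) + M * a = j + M * b := by omega
    have e4 : (((i:ℕ):ℤ) + M * a) % M = (j + M * b) % M := by rw [e3]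
    rw [Int.add_mul_emod_self_left, Int.add_mul_emod_self_left,
      Int.emod_eq_of_lt (by omega) (by have := i.2; omega),
      Int.emod_eq_of_lt (by omega) (by have := j.2; omega)] at e4
    exact Fin.ext (by exact_mod_cast e4)

/-- generic perturbation -/
lemma generic (n : ℕ) (a : Fin n → I → ℝ) (S : Finset I) (ε : ℝ) (hε : 0 < ε) :
    ∃ l : ℝ, 0 < l ∧ l < ε ∧ l < 1 ∧ ∀ y z : Fin n → I, (∀ q, y q ∈ S) → (∀ q, z q ∈ S) →
      ∑ q, (a q (y q) + l ^ (q.1 + 1) * (y q : ℝ)) = ∑ q, (a q (z q) + l ^ (q.1 + 1) * (z q : ℝ)) →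
      y = z := by
  classical
  let P : (Fin n → I) × (Fin n → I) → Polynomial ℝ := fun w =>
    Polynomial.C (∑ q, (a q (w.1 q) - a q (w.2 q))) +
      ∑ q : Fin n, Polynomial.C ((w.1 q : ℝ) - w.2 q) * Polynomial.X ^ (q.1 + 1)
  have hP : ∀ w, w.1 ≠ w.2 → P w ≠ 0 := by
    intro w hw h0
    apply hw
    funext q
    have := congrArg (fun p => Polynomial.coeff p (q.1 + 1)) h0
    simp only [P, Polynomial.coeff_add, Polynomial.coeff_C, Polynomial.finsetSum_coeff, Polynomial.coeff_C_mul, Polynomial.coeff_X_pow, Polynomial.coeff_zero, add_left_inj, Fin.val_inj] at this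
    simp at this
    exact Subtype.ext (by linarith)
  let A := (Fintype.piFinset fun _ : Fin n => S)
  let B : Finset ℝ := (A ×ˢ A).biUnion fun w => (P w).roots.toFinset
  have hinf : (Ioo (0:ℝ) (min ε 1)).Infinite := Ioo_infinite (by positivity)
  obtain ⟨l, hl, hlB⟩ := hinf.exists_notMem_finset B
  refine ⟨l, hl.1, hl.2.trans_le (min_le_left _ _), hl.2.trans_le (min_le_right _ _), ?_⟩
  intro y z hy hz h
  by_contra hne
  apply hlB
  refine Finset.mem_biUnion.2 ⟨(y, z), ?_, ?_⟩
  · simp [A, hy, hz]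
  · rw [Multiset.mem_toFinset, Polynomial.mem_roots (hP _ hne)]
    simp only [P, Polynomial.IsRoot, Polynomial.eval_add, Polynomial.eval_C,
      Polynomial.eval_finsetSum, Polynomial.eval_mul, Polynomial.eval_pow, Polynomial.eval_X]
    rw [← Finset.sum_add_distrib, ← sub_eq_zero.2 h, ← Finset.sum_sub_distrib]
    exact Finset.sum_congr rfl fun q _ => by ring

/-- outer function -/
lemma outer {X : Type*} (A : Finset X) (F : X → ℝ) (hF : Set.InjOn F A) (g : X → ℝ) (c : ℝ)
    (hc : 0 ≤ c) (hg : ∀ x, |g x| ≤ c) :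
    ∃ φ : BoundedContinuousFunction ℝ ℝ, (∀ y, |φ y| ≤ c) ∧ ∀ x ∈ A, φ (F x) = g x := by
  classical
  let p := Lagrange.interpolate A F g
  have hb : ∀ y, |max (-c) (min c (p.eval y))| ≤ c := fun y =>
    abs_le.2 ⟨le_max_left _ _, max_le (by linarith) (min_le_left _ _)⟩
  refine ⟨BoundedContinuousFunction.ofNormedAddCommGroup
    (fun y => max (-c) (min c (p.eval y))) (by fun_prop) c hb, hb, ?_⟩
  intro x hx
  have := Lagrange.eval_interpolate_at_node g hF hx
  have h2 := abs_le.1 (hg x)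
  change max (-c) (min c (p.eval (F x))) = g x
  rw [show p.eval (F x) = g x from this, min_eq_right h2.2, max_eq_right h2.1]


def Psi {n : ℕ} (ψ : Fin (2 * n + 1) → Fin n → C(I, ℝ)) (i : Fin (2 * n + 1)) :
    C(Fin n → I, ℝ) := ∑ q, (ψ i q).comp ⟨fun x => x q, continuous_apply q⟩

def T {n : ℕ} (ψ : Fin (2 * n + 1) → Fin n → C(I, ℝ))
    (φ : Fin (2 * n + 1) → BoundedContinuousFunction ℝ ℝ) : C(Fin n → I, ℝ) :=
  ∑ i, ((φ i).toContinuousMap).comp (Psi ψ i)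

lemma Psi_apply {n : ℕ} (ψ : Fin (2 * n + 1) → Fin n → C(I, ℝ)) (i) (x : Fin n → I) :
    Psi ψ i x = ∑ q, ψ i q (x q) := by simp [Psi]

lemma T_apply {n : ℕ} (ψ : Fin (2 * n + 1) → Fin n → C(I, ℝ)) (φ) (x : Fin n → I) :
    T ψ φ x = ∑ i, φ i (∑ q, ψ i q (x q)) := by simp [T, Psi_apply]

lemma T_cont {n : ℕ} (φ : Fin (2 * n + 1) → BoundedContinuousFunction ℝ ℝ) :
    Continuous (fun ψ : Fin (2 * n + 1) → Fin n → C(I, ℝ) => T ψ φ) := by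
  unfold T
  refine continuous_finsetSum _ fun i _ => (ContinuousMap.continuous_postcomp _).comp ?_
  unfold Psi
  refine continuous_finsetSum _ fun q _ => (ContinuousMap.continuous_precomp _).comp ?_
  fun_prop

lemma approx {n : ℕ} (ψ₀ : Fin (2 * n + 1) → Fin n → C(I, ℝ)) (ε : ℝ) (hε : 0 < ε)
    (g : C(Fin n → I, ℝ)) (hg : ‖g‖ ≤ 1) :
    ∃ ψ, dist ψ ψ₀ < ε ∧ ∃ φ : Fin (2 * n + 1) → BoundedContinuousFunction ℝ ℝ,
      ‖φ‖ ≤ 1 ∧ ‖g - T ψ φ‖ < 1 - 1 / (2 * (2 * n + 1)) := by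
  classical
  set M : ℝ := 2 * n + 1 with hM
  have hM1 : 1 ≤ M := by rw [hM]; have : (0:ℝ) ≤ n := by positivity
                         linarith
  have hM0 : 0 < M := by linarith
  have hc0 : 0 < 1 / M := by positivity
  have hgx : ∀ x, |g x| ≤ 1 := fun x => (g.norm_coe_le_norm x).trans hg
  -- uniform continuity
  have hH : UniformContinuous (fun t : I => fun i q => ψ₀ i q t) :=
    CompactSpace.uniformContinuous_of_continuous (by fun_prop)
  have hG : UniformContinuous g := CompactSpace.uniformContinuous_of_continuous g.continuous
  obtain ⟨δ₁, hδ₁, h1⟩ := Metric.uniformContinuous_iff.1 hH (ε / 2) (by positivity)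
  obtain ⟨δ₂, hδ₂, h2⟩ := Metric.uniformContinuous_iff.1 hG (1 / (4 * M)) (by positivity)
  obtain ⟨s, S, hs, hS⟩ := stair (2 * n + 1) (by omega) (min δ₁ δ₂) (by positivity)
  choose l hl0 hle hl1 hl using fun i => generic n (fun q t => ψ₀ i q t) S (ε / 2) (by positivity)
  let A : Finset (Fin n → I) := Fintype.piFinset fun _ => S
  choose φ hφ1 hφ2 using fun i => outer A
    (fun y : Fin n → I => ∑ q, (ψ₀ i q (y q) + l i ^ (q.1 + 1) * (y q : ℝ)))
    (by
      intro y hy z hz h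
      simp only [A, Finset.mem_coe, Fintype.mem_piFinset] at hy hz
      exact hl i y z hy hz h)
    (fun y => 1 / M * g y) (1 / M) hc0.le
    (by intro x; rw [abs_mul, abs_of_pos hc0]; exact mul_le_of_le_one_right hc0.le (hgx x))
  let ψ : Fin (2 * n + 1) → Fin n → C(I, ℝ) := fun i q =>
    ⟨fun t => ψ₀ i q (s i t) + l i ^ (q.1 + 1) * (s i t : ℝ), by fun_prop⟩
  refine ⟨ψ, ?_, φ, ?_, ?_⟩
  · rw [dist_pi_lt_iff hε]; intro i
    rw [dist_pi_lt_iff hε]; intro q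
    rw [ContinuousMap.dist_lt_iff hε]; intro t
    have a1 := h1 ((hs i t).trans_le (min_le_left _ _))
    rw [dist_pi_lt_iff (by positivity)] at a1
    have a2 := a1 i
    rw [dist_pi_lt_iff (by positivity)] at a2
    have a3 := a2 q
    rw [Real.dist_eq] at a3 ⊢
    have b1 : l i ^ (q.1 + 1) ≤ l i := by
      simpa using pow_le_pow_of_le_one (hl0 i).le (hl1 i).le (show 1 ≤ q.1 + 1 by omega)
    have b2 : 0 ≤ l i ^ (q.1 + 1) := pow_nonneg (hl0 i).le _
    have b3 : l i ^ (q.1 + 1) * (s i t : ℝ) ≤ l i ^ (q.1 + 1) :=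
      mul_le_of_le_one_right b2 (s i t).2.2
    have b4 : 0 ≤ l i ^ (q.1 + 1) * (s i t : ℝ) := mul_nonneg b2 (s i t).2.1
    have b5 := hle i
    change |ψ₀ i q (s i t) + l i ^ (q.1 + 1) * (s i t : ℝ) - ψ₀ i q t| < ε
    rw [abs_lt] at a3 ⊢
    constructor <;> linarith
  · rw [pi_norm_le_iff_of_nonneg zero_le_one]
    intro i
    refine (BoundedContinuousFunction.norm_le zero_le_one).2 fun y => (hφ1 i y).trans ?_
    rw [div_le_one hM0]; exact hM1
  · refine lt_of_le_of_lt (b := 1 / (4 * M) + 2 * n / M) ?_ ?_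
    swap
    · have : 1 - 1 / (2 * M) - (1 / (4 * M) + 2 * n / M) = 1 / (4 * M) := by
        have : 2 * (n:ℝ) = M - 1 := by rw [hM]; ring
        rw [this]; field_simp; ring
      have : 0 < 1 / (4 * M) := by positivity
      linarith
    rw [ContinuousMap.norm_le _ (by positivity)]
    intro x
    let bad : Finset (Fin (2 * n + 1)) := Finset.univ.filter fun i => ∃ q, s i (x q) ∉ S
    have hbad : bad.card ≤ n := by
      have hsub : bad ⊆ (Finset.univ : Finset (Fin n)).biUnion
          fun q => Finset.univ.filter fun i => s i (x q) ∉ S := by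
        intro i hi
        simpa [bad] using hi
      have h3 := Finset.card_biUnion_le_card_mul (Finset.univ : Finset (Fin n))
        (fun q => Finset.univ.filter fun i => s i (x q) ∉ S) 1 (by
          intro q _
          refine Finset.card_le_one.2 fun i hi j hj => ?_
          exact hS i j _ (Finset.mem_filter.1 hi).2 (Finset.mem_filter.1 hj).2)
      simpa using (Finset.card_le_card hsub).trans h3
    have hsum : (g - T ψ φ) x = ∑ i : Fin (2 * n + 1), (1 / M * g x - φ i (∑ q, ψ i q (x q))) := by
      rw [Finset.sum_sub_distrib, ContinuousMap.sub_apply, T_apply]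
      congr 1
      simp only [Finset.sum_const, Finset.card_univ, Fintype.card_fin, nsmul_eq_mul]
      push_cast
      rw [← hM]; field_simp
    rw [hsum]
    have hterm : ∀ i, ‖1 / M * g x - φ i (∑ q, ψ i q (x q))‖ ≤
        1 / M * (1 / (4 * M)) + if i ∈ bad then 2 * (1 / M) else 0 := by
      intro i
      split_ifs with hi
      · have c1 : |1 / M * g x| ≤ 1 / M := by
          rw [abs_mul, abs_of_pos hc0]; exact mul_le_of_le_one_right hc0.le (hgx x)
        have c2 := hφ1 i (∑ q, ψ i q (x q))
        have c3 : 0 ≤ 1 / M * (1 / (4 * M)) := by positivity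
        have := abs_sub (1 / M * g x) (φ i (∑ q, ψ i q (x q)))
        rw [Real.norm_eq_abs]; linarith
      · have hi' : ∀ q, s i (x q) ∈ S := by simpa [bad] using hi
        have e : φ i (∑ q, ψ i q (x q)) = 1 / M * g (fun q => s i (x q)) :=
          hφ2 i (fun q => s i (x q)) (by simpa [A] using hi')
        rw [e, ← mul_sub, Real.norm_eq_abs, abs_mul, abs_of_pos hc0, add_zero]
        have d : dist x (fun q => s i (x q)) < δ₂ := by
          rw [dist_pi_lt_iff hδ₂]; intro q
          rw [dist_comm]; exact (hs i (x q)).trans_le (min_le_right _ _)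
        have := h2 d
        rw [Real.dist_eq] at this
        exact mul_le_mul_of_nonneg_left this.le hc0.le
    refine (norm_sum_le_of_le _ fun i _ => hterm i).trans ?_
    rw [Finset.sum_add_distrib, Finset.sum_ite_mem, Finset.univ_inter]
    simp only [Finset.sum_const, Finset.card_univ, Fintype.card_fin, nsmul_eq_mul]
    push_cast
    rw [← hM, ← mul_assoc, mul_one_div_cancel hM0.ne', one_mul]
    have : (bad.card : ℝ) ≤ n := by exact_mod_cast hbad
    have : (bad.card : ℝ) * (2 * (1 / M)) ≤ n * (2 * (1 / M)) :=
      mul_le_mul_of_nonneg_right this (by positivity)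
    have e : (n:ℝ) * (2 * (1 / M)) = 2 * n / M := by ring
    linarith

lemma baire_of_complete (X : Type*) [PseudoMetricSpace X] [CompleteSpace X] : BaireSpace X :=
  inferInstance

lemma exists_psi (n : ℕ) : ∃ ψ : Fin (2 * n + 1) → Fin n → C(I, ℝ), ∃ θ : ℝ, 0 ≤ θ ∧ θ < 1 ∧
    ∀ f : C(Fin n → I, ℝ), ‖f‖ ≤ 1 → ∃ φ : Fin (2 * n + 1) → BoundedContinuousFunction ℝ ℝ,
      ‖φ‖ ≤ 1 ∧ ‖f - T ψ φ‖ ≤ θ := by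
  let B := Metric.closedBall (0 : C(Fin n → I, ℝ)) 1
  have : Nonempty B := ⟨⟨0, by simp [B]⟩⟩
  let d : ℕ → B := TopologicalSpace.denseSeq B
  set θ : ℝ := 1 - 1 / (2 * (2 * n + 1)) with hθ
  have hθ1 : 0 < 1 / (2 * (2 * (n:ℝ) + 1)) := by positivity
  have hθ2 : 1 / (2 * (2 * (n:ℝ) + 1)) ≤ 1 := by
    rw [div_le_one (by positivity)]; have : (0:ℝ) ≤ n := by positivity
    linarith
  let U : ℕ → Set (Fin (2 * n + 1) → Fin n → C(I, ℝ)) := fun k =>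
    {ψ | ∃ φ : Fin (2 * n + 1) → BoundedContinuousFunction ℝ ℝ,
      ‖φ‖ ≤ 1 ∧ ‖(d k).1 - T ψ φ‖ < θ}
  have hUo : ∀ k, IsOpen (U k) := by
    intro k
    have : U k = ⋃ φ : {φ : Fin (2 * n + 1) → BoundedContinuousFunction ℝ ℝ // ‖φ‖ ≤ 1},
        {ψ | ‖(d k).1 - T ψ φ‖ < θ} := by
      ext ψ; simp [U]
    rw [this]
    exact isOpen_iUnion fun φ =>
      isOpen_lt (continuous_const.sub (T_cont φ.1)).norm continuous_const
  have hUd : ∀ k, Dense (U k) := by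
    intro k
    rw [Metric.dense_iff]
    intro ψ₀ ε hε
    obtain ⟨ψ, h1, h2⟩ := approx ψ₀ ε hε (d k).1 (mem_closedBall_zero_iff.1 (d k).2)
    exact ⟨ψ, h1, h2⟩
  have hcs : CompleteSpace C(I, ℝ) := inferInstance
  have hcs2 : CompleteSpace (Fin (2 * n + 1) → Fin n → C(I, ℝ)) := inferInstance
  have hB : BaireSpace (Fin (2 * n + 1) → Fin n → C(I, ℝ)) :=
    baire_of_complete _
  obtain ⟨ψ, hψ⟩ := (dense_iInter_of_isOpen_nat hUo hUd).nonempty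
  refine ⟨ψ, θ + (1 - θ) / 2, by linarith, by linarith, fun f hf => ?_⟩
  obtain ⟨k, hk⟩ := (TopologicalSpace.denseRange_denseSeq B).exists_dist_lt
    (⟨f, by simpa [B] using hf⟩ : B) (show 0 < (1 - θ) / 2 by linarith)
  obtain ⟨φ, h1, h2⟩ := Set.mem_iInter.1 hψ k
  refine ⟨φ, h1, ?_⟩
  have hk' : ‖f - (d k).1‖ < (1 - θ) / 2 := by rw [← dist_eq_norm]; exact hk
  have := norm_sub_le_norm_sub_add_norm_sub f (d k).1 (T ψ φ)
  linarith

lemma T_smul {n : ℕ} (ψ : Fin (2 * n + 1) → Fin n → C(I, ℝ)) (φ) (c : ℝ) :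
    T ψ (c • φ) = c • T ψ φ := by
  ext x; simp [T_apply, Finset.mul_sum]

lemma main (n : ℕ) : ∃ ψ : Fin (2 * n + 1) → Fin n → C(I, ℝ),
    ∀ f : C(Fin n → I, ℝ), ∃ φ : Fin (2 * n + 1) → BoundedContinuousFunction ℝ ℝ, f = T ψ φ := by
  obtain ⟨ψ, θ, h0, h1, h⟩ := exists_psi n
  refine ⟨ψ, fun f => ?_⟩
  have h' : ∀ f : C(Fin n → I, ℝ), ∃ φ : Fin (2 * n + 1) → BoundedContinuousFunction ℝ ℝ,
      ‖φ‖ ≤ ‖f‖ ∧ ‖f - T ψ φ‖ ≤ θ * ‖f‖ := by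
    intro f
    by_cases hf : f = 0
    · refine ⟨0, by simp, ?_⟩
      have : T ψ 0 = 0 := by ext x; simp [T_apply]
      simp [hf, this]
    have hf' : 0 < ‖f‖ := norm_pos_iff.2 hf
    obtain ⟨φ, a, b⟩ := h (‖f‖⁻¹ • f) (by rw [norm_smul]; simp [hf'.ne'])
    refine ⟨‖f‖ • φ, ?_, ?_⟩
    · rw [norm_smul, norm_norm]; exact mul_le_of_le_one_right hf'.le a
    · have : f - T ψ (‖f‖ • φ) = ‖f‖ • (‖f‖⁻¹ • f - T ψ φ) := by
        rw [T_smul, smul_sub, smul_smul, mul_inv_cancel₀ hf'.ne', one_smul]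
      rw [this, norm_smul, norm_norm, mul_comm]
      exact mul_le_mul_of_nonneg_right b hf'.le
  choose Φ hΦ1 hΦ2 using h'
  let F : ℕ → C(Fin n → I, ℝ) := fun k => Nat.rec f (fun _ g => g - T ψ (Φ g)) k
  have hF : ∀ k, F (k + 1) = F k - T ψ (Φ (F k)) := fun k => rfl
  have hFn : ∀ k, ‖F k‖ ≤ θ ^ k * ‖f‖ := by
    intro k
    induction k with
    | zero => simp [F]
    | succ k ih =>
      rw [hF, pow_succ', mul_assoc]
      exact (hΦ2 _).trans (mul_le_mul_of_nonneg_left ih h0)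
  have hgeo := (summable_geometric_of_lt_one h0 h1).mul_right ‖f‖
  have hsum : Summable (fun k => Φ (F k)) :=
    Summable.of_norm_bounded hgeo fun k => (hΦ1 _).trans (hFn k)
  refine ⟨∑' k, Φ (F k), ?_⟩
  ext x
  have hs1 : ∀ i y, HasSum (fun k => Φ (F k) i y) ((∑' k, Φ (F k)) i y) := by
    intro i y
    have := hsum.hasSum
    rw [Pi.hasSum] at this
    exact (this i).mapL (BoundedContinuousFunction.evalCLM ℝ y)
  have hs2 : HasSum (fun k => T ψ (Φ (F k)) x) (T ψ (∑' k, Φ (F k)) x) := by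
    simp only [T_apply]
    exact hasSum_sum fun i _ => hs1 i _
  have ht := hs2.tendsto_sum_nat
  have hpart : ∀ N, ∑ k ∈ Finset.range N, T ψ (Φ (F k)) x = f x - F N x := by
    intro N
    induction N with
    | zero => simp [F]
    | succ N ih => rw [Finset.sum_range_succ, ih, hF, ContinuousMap.sub_apply]; ring
  simp only [hpart] at ht
  have hz : Filter.Tendsto (fun N => F N x) Filter.atTop (nhds 0) := by
    refine squeeze_zero_norm (fun N => ((F N).norm_coe_le_norm x).trans (hFn N)) ?_
    exact hgeo.tendsto_atTop_zero
  have := (tendsto_const_nhds (x := f x)).sub hz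
  rw [sub_zero] at this
  exact tendsto_nhds_unique this ht

end KST


/-- **Classical Kolmogorov Superposition Theorem.**
For every positive integer `n` and every continuous function `f : [0,1]^n → ℝ`,
there exist continuous outer functions `φ i : ℝ → ℝ` (`i = 1, …, 2n+1`) and
continuous inner functions `ψ i q : [0,1] → ℝ` such that
`f x = ∑ i, φ i (∑ q, ψ i q (x q))` on the cube. -/
theorem kolmogorov_superposition
    (n : ℕ) (hn : 0 < n)
    (f : (Fin n → ℝ) → ℝ)
    (hf : ContinuousOn f (Set.Icc (0 : Fin n → ℝ) 1)) :
    ∃ (φ : Fin (2 * n + 1) → ℝ → ℝ) (ψ : Fin (2 * n + 1) → Fin n → ℝ → ℝ),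
      (∀ i, Continuous (φ i)) ∧
      (∀ i q, ContinuousOn (ψ i q) (Set.Icc (0 : ℝ) 1)) ∧
      (∀ x ∈ Set.Icc (0 : Fin n → ℝ) 1,
        f x = ∑ i, φ i (∑ q, ψ i q (x q))) := by
  obtain ⟨ψ, h⟩ := KST.main n
  let g : C(Fin n → unitInterval, ℝ) := ⟨fun x => f (fun q => (x q : ℝ)), by
    refine hf.comp_continuous (by fun_prop) fun x => ?_
    exact ⟨fun q => (x q).2.1, fun q => (x q).2.2⟩⟩
  obtain ⟨φ, hφ⟩ := h g
  refine ⟨fun i => φ i, fun i q => Set.IccExtend zero_le_one (ψ i q), fun i => (φ i).continuous,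
    fun i q => ((ψ i q).continuous.Icc_extend').continuousOn, fun x hx => ?_⟩
  have := congrArg (fun k => k (fun q => (⟨x q, hx.1 q, hx.2 q⟩ : unitInterval))) hφ
  rw [KST.T_apply] at this
  change f x = _ at this
  rw [this]
  refine Finset.sum_congr rfl fun i _ => ?_
  congr 1
  refine Finset.sum_congr rfl fun q _ => ?_
  exact (Set.IccExtend_of_mem zero_le_one (ψ i q) ⟨hx.1 q, hx.2 q⟩).symm
end

section
/- Let n, m be positive integers, let u_1, …, u_m : [0,1]^n → ℝ be continuous functions, and let f : ℝ^{n+m} → ℝ be continuous. Then there exist continuous functions φ_i : ℝ → ℝ for i = 1, …, 2(n+m)+1 and continuous functions ψ_{i,q} : ℝ → ℝ for i = 1, …, 2(n+m)+1 and q = 1, …, n+m such that for every x = (x_1, …, x_n) ∈ [0,1]^n, f(x_1, …, x_n, u_1(x), …, u_m(x)) = ∑_{i=1}^{2(n+m)+1} φ_i( ∑_{q=1}^{n} ψ_{i,q}(x_q) + ∑_{j=1}^{m} ψ_{i,n+j}(u_j(x)) ). -/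
open Polynomial

noncomputable def kst_st (K : ℝ) (s : ℝ) : ℝ := s + (min 1 (K * Int.fract s) - Int.fract s)

lemma kst_st_cont (K : ℝ) (hK : 1 ≤ K) : Continuous (kst_st K) := by
  have : Continuous ((fun u : ℝ => min 1 (K * u) - u) ∘ Int.fract) := by
    apply ContinuousOn.comp_fract''
    · fun_prop
    · simp [hK]
  exact continuous_id.add this

lemma kst_st_near (K : ℝ) (hK : 1 ≤ K) (s : ℝ) : |kst_st K s - s| ≤ 1 := by
  unfold kst_st
  have h0 := Int.fract_nonneg s
  have h1 := Int.fract_lt_one s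
  have h2 : Int.fract s ≤ K * Int.fract s := by nlinarith
  rw [abs_le]
  have h3 : min 1 (K * Int.fract s) ≤ 1 := min_le_left _ _
  have h4 : Int.fract s ≤ min 1 (K * Int.fract s) := le_min h1.le h2
  constructor <;> linarith

lemma kst_st_good (K : ℝ) (hK : 1 ≤ K) (s : ℝ) (h : 1 / K ≤ Int.fract s) :
    kst_st K s = ((⌊s⌋ + 1 : ℤ) : ℝ) := by
  unfold kst_st
  have : 1 ≤ K * Int.fract s := by
    rw [div_le_iff₀ (by linarith)] at h; linarith
  rw [min_eq_left this]
  push_cast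
  have := Int.self_sub_floor s
  linarith

lemma kst_bad_unique (K : ℕ) (y : ℝ) (i j : Fin K)
    (hi : Int.fract (y - i / K) < 1 / K) (hj : Int.fract (y - j / K) < 1 / K) : i = j := by
  have hK : 0 < (K : ℝ) := by exact_mod_cast i.pos
  have ei := Int.floor_add_fract (y - i / K)
  have ej := Int.floor_add_fract (y - j / K)
  have hi0 := Int.fract_nonneg (y - i / K)
  have hj0 := Int.fract_nonneg (y - j / K)
  set a := ⌊y - (i : ℝ) / K⌋
  set b := ⌊y - (j : ℝ) / K⌋
  set u := Int.fract (y - (i : ℝ) / K)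
  set v := Int.fract (y - (j : ℝ) / K)
  rw [lt_div_iff₀ hK] at hi hj
  have e : (j : ℝ) - i - K * (a - b) = K * (u - v) := by
    have h1 : (a : ℝ) = y - i / K - u := by linarith
    have h2 : (b : ℝ) = y - j / K - v := by linarith
    rw [h1, h2]; field_simp; ring
  have hu : 0 ≤ K * u := by positivity
  have hv : 0 ≤ K * v := by positivity
  have l1 : ((j : ℤ) - (i : ℤ) - K * (a - b) : ℤ) < 1 := by
    have : (((j : ℤ) - (i : ℤ) - K * (a - b) : ℤ) : ℝ) < 1 := by push_cast; nlinarith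
    exact_mod_cast this
  have l2 : -1 < ((j : ℤ) - (i : ℤ) - K * (a - b) : ℤ) := by
    have : -1 < (((j : ℤ) - (i : ℤ) - K * (a - b) : ℤ) : ℝ) := by push_cast; nlinarith
    exact_mod_cast this
  have hiK := i.isLt
  have hjK := j.isLt
  have e0 : (j : ℤ) - i = K * (a - b) := by linarith
  have hd : (j : ℤ) - i = 0 := by
    apply Int.eq_zero_of_abs_lt_dvd (m := K) ⟨_, e0⟩
    rw [abs_lt]; constructor <;> omega
  ext; omega

lemma kst_bad_card (K N : ℕ) (y : Fin N → ℝ) :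
    (Finset.univ.filter (fun i : Fin K => ¬ ∀ q, 1 / (K : ℝ) ≤ Int.fract (y q - i / K))).card ≤ N := by
  classical
  have : Finset.univ.filter (fun i : Fin K => ¬ ∀ q, 1 / (K : ℝ) ≤ Int.fract (y q - i / K)) ⊆
      Finset.univ.biUnion (fun q : Fin N => Finset.univ.filter
        (fun i : Fin K => Int.fract (y q - i / K) < 1 / (K : ℝ))) := by
    intro i hi
    simp only [Finset.mem_filter, Finset.mem_univ, true_and, not_forall, not_le] at hi
    simpa using hi
  refine (Finset.card_le_card this).trans ?_
  refine (Finset.card_biUnion_le_card_mul _ _ 1 ?_).trans (by simp)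
  intro q _
  rw [Finset.card_le_one]
  intro i hi j hj
  simp only [Finset.mem_filter, Finset.mem_univ, true_and] at hi hj
  exact kst_bad_unique K _ i j hi hj

lemma kst_weights (N : ℕ) : ∃ w : Fin N → ℝ, ∀ z z' : Fin N → ℤ,
    ∑ q, w q * z q = ∑ q, w q * z' q → z = z' := by
  have ht : Transcendental ℤ (liouvilleNumber ((2 : ℕ) : ℝ)) := transcendental_liouvilleNumber le_rfl
  set l := liouvilleNumber ((2 : ℕ) : ℝ)
  refine ⟨fun q => l ^ (q : ℕ), fun z z' h => ?_⟩
  have h0 : aeval l (∑ q : Fin N, C (z q - z' q) * X ^ (q : ℕ) : ℤ[X]) = 0 := by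
    simp only [map_sum, map_mul, map_pow, aeval_X, aeval_C]
    simp only [eq_intCast, map_sub]
    rw [← sub_eq_zero, ← Finset.sum_sub_distrib] at h
    rw [← h]
    refine Finset.sum_congr rfl fun q _ => ?_
    simp; ring
  have h1 := (transcendental_iff.1 ht) _ h0
  funext q
  have h2 := congrArg (fun p => coeff p (q : ℕ)) h1
  simp only [finsetSum_coeff, coeff_C_mul, coeff_X_pow, coeff_zero] at h2
  rw [Finset.sum_eq_single q] at h2
  · simp at h2; omega
  · intro b _ hb
    have : (q : ℕ) ≠ b := fun h => hb (Fin.ext h.symm)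
    simp [this]
  · simp

lemma kst_interp {α : Type*} [Nonempty α] (S : Set α) (hS : S.Finite) (g v : α → ℝ) (hg : Set.InjOn g S) (M : ℝ)
    (hM : 0 ≤ M) (hv : ∀ z, |v z| ≤ M) :
    ∃ φ : BoundedContinuousFunction ℝ ℝ, ‖φ‖ ≤ M ∧ ∀ z ∈ S, φ (g z) = v z := by
  have hT : (g '' S).Finite := hS.image g
  have : Finite (g '' S) := hT
  let F : BoundedContinuousFunction (g '' S) ℝ :=
    BoundedContinuousFunction.ofNormedAddCommGroup (fun y => v (Function.invFunOn g S y))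
      continuous_of_discreteTopology M (fun y => hv _)
  obtain ⟨φ, h1, h2⟩ := F.exists_norm_eq_domRestrict_eq_of_closed hT.isClosed
  refine ⟨φ, ?_, ?_⟩
  · rw [h1]; exact BoundedContinuousFunction.norm_ofNormedAddCommGroup_le _ hM _
  · intro z hz
    have := DFunLike.congr_fun h2 ⟨g z, z, hz, rfl⟩
    simp only [BoundedContinuousFunction.domRestrict_apply] at this
    rw [this]
    show v (Function.invFunOn g S (g z)) = v z
    rw [hg.leftInvOn_invFunOn hz]

lemma kst_avoid {ι : Type*} [Countable ι] (E : ι → ℝ) (τ : ℝ) (hτ : 0 < τ) :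
    ∃ t, 0 < t ∧ t < τ ∧ ∀ i, t ≠ E i := by
  have h := (Set.countable_range E).dense_compl ℝ
  obtain ⟨t, ht1, ht2⟩ := h.exists_mem_open isOpen_Ioo (Set.nonempty_Ioo.2 hτ)
  exact ⟨t, ht2.1, ht2.2, fun i hi => ht1 ⟨i, hi.symm⟩⟩

lemma kst_combine (N K : ℕ) (hK : K = 2 * N + 1) (c M y : ℝ) (hc : c = 1 / ((N : ℝ) + 1)) (hy : |y| ≤ M)
    (B : Fin K → Prop) [DecidablePred B]
    (hB : (Finset.univ.filter (fun i => ¬ B i)).card ≤ N) (p : Fin K → ℝ)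
    (h1 : ∀ i, B i → |p i - c * y| ≤ c * (c / 4 * M)) (h2 : ∀ i, |p i| ≤ c * M) :
    |y - ∑ i, p i| ≤ (1 - c / 2) * M := by
  have hM : 0 ≤ M := (abs_nonneg _).trans hy
  have hc0 : 0 < c := by rw [hc]; positivity
  have hcN : c * (N + 1) = 1 := by rw [hc]; field_simp
  set b := (Finset.univ.filter (fun i => ¬ B i)).card with hb
  have hab := Finset.card_filter_add_card_filter_not (s := (Finset.univ : Finset (Fin K))) B
  set a := (Finset.univ.filter B).card with ha
  rw [Finset.card_univ, Fintype.card_fin, ← hb] at hab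
  have hab' : (a : ℝ) + b = 2 * N + 1 := by exact_mod_cast hab.trans hK
  have hbN : (b : ℝ) ≤ N := by exact_mod_cast hB
  rw [← Finset.sum_filter_add_sum_filter_not Finset.univ B p]
  have s1 : |∑ i with B i, (p i - c * y)| ≤ a * (c * (c / 4 * M)) := by
    refine (Finset.abs_sum_le_sum_abs _ _).trans ?_
    rw [ha, ← nsmul_eq_mul]
    exact Finset.sum_le_card_nsmul _ _ _ (fun i hi => h1 i (Finset.mem_filter.1 hi).2)
  have s2 : |∑ i with ¬ B i, p i| ≤ b * (c * M) := by
    refine (Finset.abs_sum_le_sum_abs _ _).trans ?_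
    rw [hb, ← nsmul_eq_mul]
    exact Finset.sum_le_card_nsmul _ _ _ (fun i hi => h2 i)
  rw [Finset.sum_sub_distrib, Finset.sum_const, nsmul_eq_mul, ← ha] at s1
  have hac : 1 ≤ a * c := by nlinarith
  have s3 : |(a * c - 1) * y| ≤ (a * c - 1) * M := by
    rw [abs_mul, abs_of_nonneg (by linarith)]
    exact mul_le_mul_of_nonneg_left hy (by linarith)
  have hacu : a * c ≤ 2 := by
    have : (0:ℝ) ≤ b := by positivity
    nlinarith
  have e1 : a * (c * (c / 4 * M)) ≤ c / 2 * M := by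
    have : a * c * (c / 4 * M) ≤ 2 * (c / 4 * M) := mul_le_mul_of_nonneg_right hacu (by positivity)
    linarith
  have e2 : (a * c - 1) * M + b * (c * M) = (1 - c) * M := by
    have : a * c - 1 + b * c = 1 - c := by nlinarith
    rw [← this]; ring
  rw [abs_le] at *
  constructor <;> linarith [s1.1, s1.2, s2.1, s2.2, s3.1, s3.2]

open BoundedContinuousFunction in
noncomputable def kst_G {a b : ℝ} {N K : ℕ} (ψ : Fin K → Fin N → C(Set.Icc a b, ℝ)) (i : Fin K) :
    C(Fin N → Set.Icc a b, ℝ) :=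
  ∑ q, (ψ i q).comp ⟨fun x => x q, continuous_apply q⟩

lemma kst_G_apply {a b : ℝ} {N K : ℕ} (ψ : Fin K → Fin N → C(Set.Icc a b, ℝ)) (i : Fin K)
    (x : Fin N → Set.Icc a b) : kst_G ψ i x = ∑ q, ψ i q (x q) := by
  simp [kst_G, ContinuousMap.sum_apply]

noncomputable def kst_T {a b : ℝ} {N K : ℕ} (φ : Fin K → BoundedContinuousFunction ℝ ℝ)
    (ψ : Fin K → Fin N → C(Set.Icc a b, ℝ)) : C(Fin N → Set.Icc a b, ℝ) :=
  ∑ i, (φ i).toContinuousMap.comp (kst_G ψ i)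

lemma kst_T_apply {a b : ℝ} {N K : ℕ} (φ : Fin K → BoundedContinuousFunction ℝ ℝ)
    (ψ : Fin K → Fin N → C(Set.Icc a b, ℝ)) (x : Fin N → Set.Icc a b) :
    kst_T φ ψ x = ∑ i, φ i (∑ q, ψ i q (x q)) := by
  simp [kst_T, ContinuousMap.sum_apply, kst_G_apply]

lemma kst_T_cont {a b : ℝ} {N K : ℕ} (φ : Fin K → BoundedContinuousFunction ℝ ℝ) :
    Continuous (fun ψ : Fin K → Fin N → C(Set.Icc a b, ℝ) => kst_T φ ψ) := by
  unfold kst_T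
  refine continuous_finsetSum _ fun i _ => ?_
  refine (ContinuousMap.continuous_postcomp _).comp ?_
  unfold kst_G
  refine continuous_finsetSum _ fun q _ => ?_
  refine (ContinuousMap.continuous_precomp _).comp ?_
  fun_prop

lemma kst_density {a b : ℝ} (hab : a ≤ b) (N K : ℕ) (hKdef : K = 2 * N + 1) (c : ℝ) (hc : c = 1 / ((N : ℝ) + 1))
    (f : C(Fin N → Set.Icc a b, ℝ)) (hf : f ≠ 0)
    (ψ₀ : Fin K → Fin N → C(Set.Icc a b, ℝ)) (ε : ℝ) (hε : 0 < ε) :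
    ∃ ψ : Fin K → Fin N → C(Set.Icc a b, ℝ), dist ψ ψ₀ < ε ∧
      ∃ φ : Fin K → BoundedContinuousFunction ℝ ℝ,
        (∀ i, ‖φ i‖ ≤ ‖f‖) ∧ ‖f - kst_T φ ψ‖ ≤ (1 - c / 2) * ‖f‖ := by
  classical
  have hM : 0 < ‖f‖ := norm_pos_iff.2 hf
  set M := ‖f‖ with hMdef
  have hc0 : 0 < c := by rw [hc]; positivity
  have hc1 : c ≤ 1 := by rw [hc, div_le_one (by positivity)]; linarith [Nat.cast_nonneg (α := ℝ) N]
  have hK1 : (1 : ℝ) ≤ (K : ℝ) := by rw [hKdef]; push_cast; linarith [Nat.cast_nonneg (α := ℝ) N]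
  have hK0 : (0 : ℝ) < K := by linarith
  -- uniform continuity
  obtain ⟨δ₁, hδ₁, H1⟩ := Metric.uniformContinuous_iff.1
    (CompactSpace.uniformContinuous_of_continuous f.continuous) (c / 4 * M) (by positivity)
  have hpsi : Continuous (fun s : Set.Icc a b => fun (i : Fin K) (q : Fin N) => ψ₀ i q s) := by
    fun_prop
  obtain ⟨δ₂, hδ₂, H2⟩ := Metric.uniformContinuous_iff.1
    (CompactSpace.uniformContinuous_of_continuous hpsi) (ε / 4) (by positivity)
  obtain ⟨H, hH, hHδ₁, hHδ₂⟩ : ∃ H : ℝ, 0 < H ∧ 2 * H < δ₁ ∧ 2 * H < δ₂ :=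
    ⟨min δ₁ δ₂ / 4, by positivity, by linarith [min_le_left δ₁ δ₂, lt_min hδ₁ hδ₂], by
      linarith [min_le_right δ₁ δ₂, lt_min hδ₁ hδ₂]⟩
  obtain ⟨w, hw⟩ := kst_weights N
  let arg : Fin K → ℝ → ℝ := fun i s => s / H - i / K
  let r : Fin K → Set.Icc a b → ℝ := fun i s => kst_st K (arg i s)
  have hr : ∀ i, Continuous (r i) := fun i => (kst_st_cont K hK1).comp (by fun_prop)
  let P : ℝ → Set.Icc a b := fun y => Set.projIcc a b hab (H * y)
  have hP : Continuous P := continuous_projIcc.comp (by fun_prop)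
  have hnear : ∀ i (s : Set.Icc a b), dist (P (r i s)) s ≤ 2 * H := by
    intro i s
    have h1 : |H * r i s - s| ≤ 2 * H := by
      have h2 := kst_st_near K hK1 (arg i s)
      have e : H * r i s - s = H * ((kst_st K (arg i s) - arg i s) - i / K) := by
        simp only [r, arg]; field_simp; ring
      have h3 : (0 : ℝ) ≤ i / K := by positivity
      have h4 : (i : ℝ) / K ≤ 1 := by
        rw [div_le_one hK0]; exact_mod_cast i.isLt.le
      rw [e, abs_mul, abs_of_pos hH, mul_comm 2 H]
      apply mul_le_mul_of_nonneg_left _ hH.le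
      rw [abs_le] at *
      constructor <;> linarith [h2.1, h2.2]
    refine le_trans ?_ h1
    have h5 : (s : Set.Icc a b) = Set.projIcc a b hab (s : ℝ) := (Set.projIcc_val hab s).symm
    rw [Subtype.dist_eq, Real.dist_eq]
    have h6 := Set.abs_projIcc_sub_projIcc (c := H * r i s) (d := (s : ℝ)) hab
    rwa [← h5] at h6
  -- bound for perturbation
  obtain ⟨W, hW, hWb⟩ : ∃ W : ℝ, 0 < W ∧ ∀ i q s, |w q * r i s| ≤ W := by
    have hc : Continuous (fun s : Set.Icc a b => fun (i : Fin K) (q : Fin N) => w q * r i s) := by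
      refine continuous_pi fun i => continuous_pi fun q => continuous_const.mul (hr i)
    obtain ⟨C, hC⟩ := (isCompact_range hc).isBounded.exists_norm_le
    refine ⟨max C 1, by positivity, fun i q s => ?_⟩
    have h1 := hC _ ⟨s, rfl⟩
    exact ((norm_le_pi_norm _ q).trans ((norm_le_pi_norm _ i).trans h1)).trans (le_max_left _ _)
  let A : Fin K → (Fin N → ℤ) → ℝ := fun i z => ∑ q, ψ₀ i q (P (z q))
  let B : (Fin N → ℤ) → ℝ := fun z => ∑ q, w q * z q
  obtain ⟨t, ht0, ht1, ht⟩ := kst_avoid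
    (fun p : Fin K × (Fin N → ℤ) × (Fin N → ℤ) =>
      -(A p.1 p.2.1 - A p.1 p.2.2) / (B p.2.1 - B p.2.2)) (ε / 4 / W) (by positivity)
  have hinj : ∀ i, Function.Injective (fun z => A i z + t * B z) := by
    intro i z z' h
    by_contra hne
    have hB : B z - B z' ≠ 0 := fun h0 => hne (hw z z' (sub_eq_zero.1 h0))
    apply ht (i, z, z')
    simp only
    rw [eq_div_iff hB]
    simp only at h
    linarith
  let ψ : Fin K → Fin N → C(Set.Icc a b, ℝ) := fun i q =>
    ⟨fun s => ψ₀ i q (P (r i s)) + t * (w q * r i s),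
      ((ψ₀ i q).continuous.comp (hP.comp (hr i))).add
        (continuous_const.mul (continuous_const.mul (hr i)))⟩
  have hψ : ∀ i q s, ψ i q s = ψ₀ i q (P (r i s)) + t * (w q * r i s) := fun _ _ _ => rfl
  -- finite range of z
  let zz : Fin K → (Fin N → Set.Icc a b) → (Fin N → ℤ) := fun i x q => ⌊arg i (x q)⌋ + 1
  have hSfin : ∀ i, (Set.range (zz i)).Finite := by
    intro i
    refine (Set.finite_Icc (fun _ : Fin N => ⌊arg i a⌋ + 1) (fun _ => ⌊arg i b⌋ + 1)).subset ?_
    rintro _ ⟨x, rfl⟩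
    have hm : ∀ s t : ℝ, s ≤ t → arg i s ≤ arg i t := fun s t hst => by
      simp only [arg]
      have := div_le_div_of_nonneg_right hst hH.le
      linarith
    constructor <;> intro q
    · exact add_le_add_left (Int.floor_le_floor (hm _ _ (x q).2.1)) _
    · exact add_le_add_left (Int.floor_le_floor (hm _ _ (x q).2.2)) _
  have hφ : ∀ i, ∃ φ : BoundedContinuousFunction ℝ ℝ, ‖φ‖ ≤ c * M ∧
      ∀ z ∈ Set.range (zz i), φ (A i z + t * B z) = c * f (fun q => P (z q)) := by
    intro i
    refine kst_interp _ (hSfin i) _ (fun z => c * f (fun q => P (z q))) (hinj i).injOn (c * M)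
      (by positivity) ?_
    intro z
    rw [abs_mul, abs_of_pos hc0]
    exact mul_le_mul_of_nonneg_left (f.norm_coe_le_norm _) hc0.le
  choose φ hφ1 hφ2 using hφ
  refine ⟨ψ, ?_, φ, fun i => (hφ1 i).trans (by nlinarith), ?_⟩
  · refine lt_of_le_of_lt ?_ (half_lt_self hε)
    refine (dist_pi_le_iff (by positivity)).2 fun i => (dist_pi_le_iff (by positivity)).2 fun q => ?_
    refine (ContinuousMap.dist_le (by positivity)).2 fun s => ?_
    rw [hψ, Real.dist_eq]
    have h1 := H2 (lt_of_le_of_lt (hnear i s) hHδ₂)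
    have h2 : |ψ₀ i q (P (r i s)) - ψ₀ i q s| < ε / 4 :=
      (dist_pi_lt_iff (by positivity)).1 ((dist_pi_lt_iff (by positivity)).1 h1 i) q
    have h3 : |t * (w q * r i s)| ≤ ε / 4 := by
      rw [abs_mul, abs_of_pos ht0]
      calc t * |w q * r i s| ≤ (ε / 4 / W) * W :=
            mul_le_mul ht1.le (hWb i q s) (abs_nonneg _) (by positivity)
        _ = ε / 4 := by field_simp
    rw [abs_lt] at h2
    rw [abs_le] at *
    constructor <;> linarith [h2.1, h2.2, h3.1, h3.2]
  · have hnn : 0 ≤ (1 - c / 2) * M := mul_nonneg (by linarith) hM.le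
    refine (ContinuousMap.norm_le _ hnn).2 fun x => ?_
    rw [ContinuousMap.sub_apply, kst_T_apply, Real.norm_eq_abs]
    refine kst_combine N K hKdef c M (f x) hc (f.norm_coe_le_norm x)
      (fun i => ∀ q, 1 / (K : ℝ) ≤ Int.fract ((x q : ℝ) / H - i / K))
      (kst_bad_card K N (fun q => (x q : ℝ) / H)) _ ?_ ?_
    · intro i hi
      have hrz : ∀ q, r i (x q) = (zz i x q : ℝ) := fun q => kst_st_good K hK1 _ (hi q)
      have e : ∑ q, ψ i q (x q) = A i (zz i x) + t * B (zz i x) := by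
        simp only [hψ, hrz, A, B, Finset.sum_add_distrib, Finset.mul_sum]
      rw [e, hφ2 i _ ⟨x, rfl⟩, ← mul_sub, abs_mul, abs_of_pos hc0]
      refine mul_le_mul_of_nonneg_left ?_ hc0.le
      refine (H1 (lt_of_le_of_lt ?_ hHδ₁)).le
      refine (dist_pi_le_iff (by positivity)).2 fun q => ?_
      rw [← hrz]
      exact hnear i (x q)
    · intro i
      exact ((φ i).norm_coe_le_norm _).trans (hφ1 i)

lemma kst_baire {a b : ℝ} (hab : a ≤ b) (N : ℕ) : ∃ θ : ℝ, 0 ≤ θ ∧ θ < 1 ∧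
    ∃ ψ : Fin (2 * N + 1) → Fin N → C(Set.Icc a b, ℝ),
      ∀ f : C(Fin N → Set.Icc a b, ℝ), ∃ φ : Fin (2 * N + 1) → BoundedContinuousFunction ℝ ℝ,
        (∀ i, ‖φ i‖ ≤ 2 * ‖f‖) ∧ ‖f - kst_T φ ψ‖ ≤ θ * ‖f‖ := by
  obtain ⟨c, hc⟩ : ∃ c, c = 1 / ((N : ℝ) + 1) := ⟨_, rfl⟩
  have hc0 : 0 < c := by rw [hc]; positivity
  have hc1 : c ≤ 1 := by rw [hc, div_le_one (by positivity)]; linarith [Nat.cast_nonneg (α := ℝ) N]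
  refine ⟨1 - c / 8, by linarith, by linarith, ?_⟩
  obtain ⟨D, hDc, hDd⟩ := TopologicalSpace.exists_countable_dense C(Fin N → Set.Icc a b, ℝ)
  let U : C(Fin N → Set.Icc a b, ℝ) → Set (Fin (2 * N + 1) → Fin N → C(Set.Icc a b, ℝ)) := fun f =>
    {ψ | ∃ φ : Fin (2 * N + 1) → BoundedContinuousFunction ℝ ℝ,
      (∀ i, ‖φ i‖ ≤ ‖f‖) ∧ ‖f - kst_T φ ψ‖ < (1 - c / 4) * ‖f‖}
  have hUo : ∀ f, IsOpen (U f) := by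
    intro f
    have : U f = ⋃ φ ∈ {φ : Fin (2 * N + 1) → BoundedContinuousFunction ℝ ℝ | ∀ i, ‖φ i‖ ≤ ‖f‖},
        {ψ | ‖f - kst_T φ ψ‖ < (1 - c / 4) * ‖f‖} := by
      ext ψ; simp [U]
    rw [this]
    refine isOpen_biUnion fun φ _ => ?_
    exact isOpen_lt (continuous_const.sub (kst_T_cont φ)).norm continuous_const
  have hUd : ∀ f, f ≠ 0 → Dense (U f) := by
    intro f hf
    rw [Metric.dense_iff]
    intro ψ₀ ε hε
    obtain ⟨ψ, h1, φ, h2, h3⟩ := kst_density hab N _ rfl c hc f hf ψ₀ ε hε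
    have hM : 0 < ‖f‖ := norm_pos_iff.2 hf
    exact ⟨ψ, h1, φ, h2, lt_of_le_of_lt h3 (by nlinarith)⟩
  have hB : BaireSpace (Fin (2 * N + 1) → Fin N → C(Set.Icc a b, ℝ)) := by
    have h0 : CompleteSpace C(Set.Icc a b, ℝ) := inferInstance
    have h1 : CompleteSpace (Fin (2 * N + 1) → Fin N → C(Set.Icc a b, ℝ)) := inferInstance
    have h2 : TopologicalSpace.IsCompletelyPseudoMetrizableSpace
      (Fin (2 * N + 1) → Fin N → C(Set.Icc a b, ℝ)) := inferInstance
    exact BaireSpace.of_completelyPseudoMetrizable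
  have hd := dense_biInter_of_isOpen (S := D \ {0}) (f := U) (fun f _ => hUo f)
    (hDc.mono Set.sdiff_subset) (fun f hf => hUd f hf.2)
  obtain ⟨ψ, hψ⟩ := hd.nonempty
  refine ⟨ψ, fun f => ?_⟩
  by_cases hf : f = 0
  · refine ⟨0, by simp, ?_⟩
    have : kst_T (0 : Fin (2 * N + 1) → BoundedContinuousFunction ℝ ℝ) ψ = 0 := by
      ext x; rw [kst_T_apply]; simp
    rw [this, hf]; simp
  have hM : 0 < ‖f‖ := norm_pos_iff.2 hf
  obtain ⟨d, hdD, hdf⟩ := Metric.dense_iff.1 hDd f (c / 16 * ‖f‖) (by positivity)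
  rw [Metric.mem_ball, dist_eq_norm] at hdD
  have hdn : ‖d‖ ≤ (1 + c / 16) * ‖f‖ := by
    have := norm_le_norm_add_norm_sub' d f
    linarith
  have hd0 : d ≠ 0 := by
    rintro rfl
    rw [zero_sub, norm_neg] at hdD
    nlinarith
  have := Set.mem_iInter₂.1 hψ d ⟨hdf, hd0⟩
  obtain ⟨φ, h1, h2⟩ := this
  refine ⟨φ, fun i => (h1 i).trans (by nlinarith), ?_⟩
  have h3 : ‖f - kst_T φ ψ‖ ≤ ‖d - f‖ + ‖d - kst_T φ ψ‖ := by
    rw [norm_sub_rev d f]; exact norm_sub_le_norm_sub_add_norm_sub _ _ _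
  have h4 : (1 - c / 4) * ‖d‖ ≤ (1 - c / 4) * ((1 + c / 16) * ‖f‖) :=
    mul_le_mul_of_nonneg_left hdn (by linarith)
  have h5 : c / 16 * ‖f‖ + (1 - c / 4) * ((1 + c / 16) * ‖f‖) ≤ (1 - c / 8) * ‖f‖ := by
    have : c / 16 + (1 - c / 4) * (1 + c / 16) ≤ 1 - c / 8 := by nlinarith
    nlinarith
  linarith

lemma kst_main {a b : ℝ} (hab : a ≤ b) (N : ℕ) :
    ∃ ψ : Fin (2 * N + 1) → Fin N → C(Set.Icc a b, ℝ),
      ∀ f : C(Fin N → Set.Icc a b, ℝ), ∃ φ : Fin (2 * N + 1) → BoundedContinuousFunction ℝ ℝ,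
        ∀ x, f x = ∑ i, φ i (∑ q, ψ i q (x q)) := by
  obtain ⟨θ, hθ0, hθ1, ψ, hψ⟩ := kst_baire hab N
  refine ⟨ψ, fun f => ?_⟩
  choose Φ hΦ1 hΦ2 using hψ
  let F : ℕ → C(Fin N → Set.Icc a b, ℝ) := fun k => (fun g => g - kst_T (Φ g) ψ)^[k] f
  have hFs : ∀ k, F (k + 1) = F k - kst_T (Φ (F k)) ψ := fun k =>
    Function.iterate_succ_apply' _ _ _
  have hFn : ∀ k, ‖F k‖ ≤ θ ^ k * ‖f‖ := by
    intro k
    induction k with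
    | zero => simp [F]
    | succ k ih =>
      rw [hFs]
      refine (hΦ2 _).trans ?_
      rw [pow_succ']
      calc θ * ‖F k‖ ≤ θ * (θ ^ k * ‖f‖) := mul_le_mul_of_nonneg_left ih hθ0
        _ = _ := by ring
  have hsum : ∀ i, Summable (fun k => Φ (F k) i) := by
    intro i
    refine Summable.of_norm_bounded (g := fun k => θ ^ k * (2 * ‖f‖))
      ((summable_geometric_of_lt_one hθ0 hθ1).mul_right _) fun k => ?_
    refine (hΦ1 _ i).trans ?_
    linarith [hFn k]
  refine ⟨fun i => ∑' k, Φ (F k) i, fun x => ?_⟩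
  have h1 : ∀ i, HasSum (fun k => Φ (F k) i (∑ q, ψ i q (x q)))
      ((∑' k, Φ (F k) i) (∑ q, ψ i q (x q))) := fun i =>
    (hsum i).hasSum.mapL (BoundedContinuousFunction.evalCLM ℝ (∑ q, ψ i q (x q)))
  have h2 := hasSum_sum (s := Finset.univ) (fun i _ => h1 i)
  have h3 := h2.tendsto_sum_nat
  have h4 : ∀ n, ∑ k ∈ Finset.range n, ∑ i, Φ (F k) i (∑ q, ψ i q (x q)) = f x - F n x := by
    intro n
    induction n with
    | zero => simp [F]
    | succ n ih =>
      rw [Finset.sum_range_succ, ih, hFs, ContinuousMap.sub_apply, kst_T_apply]; ring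
  simp only [h4] at h3
  have h5 : Filter.Tendsto (fun n => F n x) Filter.atTop (nhds 0) := by
    refine squeeze_zero_norm (a := fun n => θ ^ n * ‖f‖)
      (fun n => ((F n).norm_coe_le_norm x).trans (hFn n)) ?_
    simpa using (tendsto_pow_atTop_nhds_zero_of_lt_one hθ0 hθ1).mul_const ‖f‖
  have h6 : Filter.Tendsto (fun n => f x - F n x) Filter.atTop (nhds (f x)) := by
    simpa using h5.const_sub (f x)
  exact tendsto_nhds_unique h6 h3

/-- **Feature-Enriched Kolmogorov Superposition Theorem.**
Given continuous feature maps `u j : [0,1]^n → ℝ` and a continuous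
`f : ℝ^(n+m) → ℝ`, there exist continuous outer functions `φ i` and continuous
inner functions `ψ i q : ℝ → ℝ` (`i = 1, …, 2(n+m)+1`, `q = 1, …, n+m`) such
that for all `x ∈ [0,1]^n`,
`f (x, u 1 x, …, u m x) = ∑ i, φ i (∑ q ψ i q (x q) + ∑ j ψ i (n+j) (u j x))`. -/
theorem feature_enriched_kolmogorov_superposition
    (n m : ℕ) (hn : 0 < n) (hm : 0 < m)
    (u : Fin m → (Fin n → ℝ) → ℝ)
    (hu : ∀ j, ContinuousOn (u j) (Set.Icc (0 : Fin n → ℝ) 1))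
    (f : (Fin (n + m) → ℝ) → ℝ) (hf : Continuous f) :
    ∃ (φ : Fin (2 * (n + m) + 1) → ℝ → ℝ)
      (ψ : Fin (2 * (n + m) + 1) → Fin (n + m) → ℝ → ℝ),
      (∀ i, Continuous (φ i)) ∧
      (∀ i q, Continuous (ψ i q)) ∧
      (∀ x ∈ Set.Icc (0 : Fin n → ℝ) 1,
        f (Fin.append x (fun j => u j x)) =
          ∑ i, φ i ((∑ q : Fin n, ψ i (Fin.castAdd m q) (x q)) +
            ∑ j : Fin m, ψ i (Fin.natAdd n j) (u j x))) := by
  obtain ⟨R, hR0, hR⟩ : ∃ R : ℝ, 1 ≤ R ∧ ∀ x ∈ Set.Icc (0 : Fin n → ℝ) 1, ∀ j, |u j x| ≤ R := by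
    have hc : ContinuousOn (fun x => fun j => u j x) (Set.Icc (0 : Fin n → ℝ) 1) :=
      continuousOn_pi.2 hu
    obtain ⟨C, hC⟩ := (isCompact_Icc.image_of_continuousOn hc).isBounded.exists_norm_le
    refine ⟨max C 1, le_max_right _ _, fun x hx j => ?_⟩
    exact ((norm_le_pi_norm _ j).trans (hC _ ⟨x, hx, rfl⟩)).trans (le_max_left _ _)
  have hab : -R ≤ R := by linarith
  obtain ⟨ψ, hψ⟩ := kst_main hab (n + m)
  obtain ⟨φ, hφ⟩ := hψ ⟨fun x => f (fun q => (x q : ℝ)), hf.comp (by fun_prop)⟩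
  refine ⟨fun i => φ i, fun i q y => ψ i q (Set.projIcc (-R) R hab y),
    fun i => (φ i).continuous, fun i q => (ψ i q).continuous.comp continuous_projIcc, ?_⟩
  intro x hx
  have hmem : ∀ q, Fin.append x (fun j => u j x) q ∈ Set.Icc (-R) R := by
    intro q
    refine Fin.addCases (fun q => ?_) (fun j => ?_) q
    · rw [Fin.append_left]
      have h1 := hx.1 q
      have h2 := hx.2 q
      simp only [Pi.zero_apply, Pi.one_apply] at h1 h2
      constructor <;> linarith
    · rw [Fin.append_right]
      exact abs_le.1 (hR x hx j)
  have key := hφ (fun q => ⟨Fin.append x (fun j => u j x) q, hmem q⟩)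
  simp only [ContinuousMap.coe_mk] at key
  rw [key]
  refine Finset.sum_congr rfl fun i _ => ?_
  have e := Fin.sum_univ_add
    (fun q => ψ i q (Set.projIcc (-R) R hab (Fin.append x (fun j => u j x) q)))
  simp only [Fin.append_left, Fin.append_right] at e
  rw [← e]
  congr 1
  refine Finset.sum_congr rfl fun q _ => ?_
  rw [Set.projIcc_of_mem hab (hmem q)]
end
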